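/- Let X1, X2, Y, Z be random variables with values in finite sets on a common probability space. Suppose Z is a deterministic function of X1, and Z is also a deterministic function of the pair (Y, X2). Then H(Y) ≥ H(X1 | X2) − H(X1 | Z). -/

import Mathlib

/-!
The inequality is the chain
`H(X1, X2) + H(Z) ≤ H(X1, Z, X2) + H(Z) ≤ H(X1, Z) + H(Z, X2)` and
`H(Z, X2) ≤ H(Y, X2) ≤ H(Y) + H(X2)`.
The steps are monotonicity of entropy under functions (`H_comp_le`), applied to a projection and
to the map recovering `(Z, X2)` from `(Y, X2)`, and submodularity (`H_submodular`), whose instance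
with a constant middle variable is subadditivity. Both facts are proved by writing the entropy of
each marginal `f ∘ W` as an average of `-log` of its probabilities over the law of the common
variable `W` (`H_comp_eq`). Monotonicity then holds term by term because `log` is monotone.
For submodularity, `log x ≤ x - 1` bounds each term by a difference of two weights of total mass
one: the Markov law `P(a, b) P(b, c) / P(b)` (`sum_markov`) and the joint law.
-/

/-!
Shannon entropy, conditional entropy, and mutual information for discrete random
variables defined on a common probability space modelled by a `PMF`.
The logarithm is the natural logarithm and `0 log 0 = 0` (via `Real.negMulLog`).
-/

namespace DiamondWiretap

/-- Shannon entropy `H(X)` of a random variable `X` on the probability space `(Ω, p)`. -/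
noncomputable def H {Ω S : Type*} (p : PMF Ω) (X : Ω → S) : ℝ :=
  ∑' s : S, Real.negMulLog ((p.map X) s).toReal

/-- Joint entropy `H(X, Y)`. -/
noncomputable def H2 {Ω S T : Type*} (p : PMF Ω) (X : Ω → S) (Y : Ω → T) : ℝ :=
  H p (fun ω => (X ω, Y ω))

/-- Conditional entropy `H(X | Y) = H(X, Y) - H(Y)`. -/
noncomputable def condEnt {Ω S T : Type*} (p : PMF Ω) (X : Ω → S) (Y : Ω → T) : ℝ :=
  H2 p X Y - H p Y

/-- Mutual information `I(X; Y) = H(X) + H(Y) - H(X, Y)`. -/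
noncomputable def mutInfo {Ω S T : Type*} (p : PMF Ω) (X : Ω → S) (Y : Ω → T) : ℝ :=
  H p X + H p Y - H2 p X Y

/-- Conditional mutual information `I(X; Y | Z) = H(X,Z) + H(Y,Z) - H(X,Y,Z) - H(Z)`. -/
noncomputable def condMutInfo {Ω S T U : Type*} (p : PMF Ω)
    (X : Ω → S) (Y : Ω → T) (Z : Ω → U) : ℝ :=
  H2 p X Z + H2 p Y Z - H p (fun ω => (X ω, Y ω, Z ω)) - H p Z

/-- `Z` is almost surely a deterministic function of `X`,
i.e. `Z = φ ∘ X` on the support of `p` for some function `φ`. -/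
def IsDetFnOf {Ω S T : Type*} (p : PMF Ω) (Z : Ω → T) (X : Ω → S) : Prop :=
  ∃ φ : S → T, ∀ ω ∈ p.support, Z ω = φ (X ω)

end DiamondWiretap

open DiamondWiretap

/-- The probability `P(X = s)` as a real number. -/
noncomputable def prob {Ω S : Type*} (p : PMF Ω) (X : Ω → S) (s : S) : ℝ :=
  ((p.map X) s).toReal

lemma prob_nonneg {Ω S : Type*} (p : PMF Ω) (X : Ω → S) (s : S) : 0 ≤ prob p X s :=
  ENNReal.toReal_nonneg

lemma sum_prob {Ω S : Type*} [Fintype S] (p : PMF Ω) (X : Ω → S) : ∑ s, prob p X s = 1 := by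
  unfold prob
  rw [← ENNReal.toReal_sum (fun s _ => (p.map X).apply_ne_top s), ← tsum_fintype (L := .unconditional S),
    PMF.tsum_coe, ENNReal.toReal_one]

open Classical in
lemma prob_comp {Ω S T : Type*} [Fintype S] (p : PMF Ω) (W : Ω → S) (f : S → T) (t : T) :
    prob p (fun ω => f (W ω)) t = ∑ w, if f w = t then prob p W w else 0 := by
  have h : p.map (fun ω => f (W ω)) = (p.map W).map f := by
    rw [PMF.map_comp]; rfl
  unfold prob
  rw [h, PMF.map_apply, tsum_fintype, ENNReal.toReal_sum]
  · refine Finset.sum_congr rfl fun w _ => ?_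
    by_cases hw : f w = t
    · simp [hw]
    · simp [hw, Ne.symm hw]
  · intro w _
    split_ifs
    · exact PMF.apply_ne_top _ _
    · simp

lemma prob_le_prob_comp {Ω S T : Type*} [Fintype S] (p : PMF Ω) (W : Ω → S) (f : S → T) (w : S) :
    prob p W w ≤ prob p (fun ω => f (W ω)) (f w) := by
  classical
  rw [prob_comp p W f]
  refine le_trans (by simp) (Finset.single_le_sum
    (f := fun v => if f v = f w then prob p W v else 0) (fun v _ => ?_) (Finset.mem_univ w))
  split_ifs
  · exact prob_nonneg _ _ _
  · exact le_rfl

/-- The entropy of `f ∘ W` as an expectation over the law of `W`. -/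
lemma H_comp_eq {Ω S T : Type*} [Fintype S] [Fintype T] (p : PMF Ω) (W : Ω → S) (f : S → T) :
    H p (fun ω => f (W ω)) =
      ∑ w, prob p W w * -Real.log (prob p (fun ω => f (W ω)) (f w)) := by
  classical
  have h : ∀ t, Real.negMulLog (prob p (fun ω => f (W ω)) t) =
      ∑ w, if f w = t then prob p W w * -Real.log (prob p (fun ω => f (W ω)) t) else 0 := by
    intro t
    rw [Real.negMulLog, neg_mul, ← mul_neg]
    nth_rewrite 1 [prob_comp p W f t]
    rw [Finset.sum_mul]
    simp only [ite_mul, zero_mul]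
  unfold H
  rw [tsum_fintype]
  change ∑ t, Real.negMulLog (prob p (fun ω => f (W ω)) t) = _
  rw [Finset.sum_congr rfl fun t _ => h t, Finset.sum_comm]
  simp

lemma H_comp_le {Ω S T : Type*} [Fintype S] [Fintype T] (p : PMF Ω) (W : Ω → S) (f : S → T) :
    H p (fun ω => f (W ω)) ≤ H p W := by
  have h := H_comp_eq p W id
  simp only [id] at h
  rw [H_comp_eq, h]
  refine Finset.sum_le_sum fun w _ => ?_
  rcases (prob_nonneg p W w).eq_or_lt with h0 | h0
  · simp [← h0]
  · exact mul_le_mul_of_nonneg_left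
      (neg_le_neg (Real.log_le_log h0 (prob_le_prob_comp p W f w))) h0.le

/-- `H` depends on the random variable only through its almost sure values. -/
lemma H_congr {Ω S : Type*} (p : PMF Ω) (X X' : Ω → S) (h : ∀ ω ∈ p.support, X ω = X' ω) :
    H p X = H p X' := by
  classical
  have : p.map X = p.map X' := by
    ext s
    rw [PMF.map_apply, PMF.map_apply]
    refine tsum_congr fun ω => ?_
    by_cases hω : ω ∈ p.support
    · rw [h ω hω]
    · rw [PMF.mem_support_iff, not_not] at hω
      simp [hω]
  unfold H
  rw [this]

lemma sum_prob_fst {Ω S T : Type*} [Fintype S] [Fintype T] (p : PMF Ω) (A : Ω → S) (B : Ω → T)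
    (t : T) : ∑ s, prob p (fun ω => (A ω, B ω)) (s, t) = prob p B t := by
  classical
  have h := prob_comp p (fun ω => (A ω, B ω)) Prod.snd t
  rw [Fintype.sum_prod_type] at h
  simpa using h.symm

lemma sum_prob_snd {Ω S T : Type*} [Fintype S] [Fintype T] (p : PMF Ω) (A : Ω → S) (B : Ω → T)
    (s : S) : ∑ t, prob p (fun ω => (A ω, B ω)) (s, t) = prob p A s := by
  classical
  have h := prob_comp p (fun ω => (A ω, B ω)) Prod.fst s
  rw [Fintype.sum_prod_type_right] at h
  simpa using h.symm

/-- The weights `P(a, b) P(b, c) / P(b)`, which are the law making `A` and `C` conditionally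
independent given `B`, have total mass one. -/
lemma sum_markov {Ω S T U : Type*} [Fintype S] [Fintype T] [Fintype U] (p : PMF Ω)
    (A : Ω → S) (B : Ω → T) (C : Ω → U) :
    ∑ w : S × T × U, prob p (fun ω => (A ω, B ω)) (w.1, w.2.1) *
      prob p (fun ω => (B ω, C ω)) (w.2.1, w.2.2) / prob p B w.2.1 = 1 := by
  simp only [Fintype.sum_prod_type]
  simp only [← Finset.sum_div, ← Finset.mul_sum, sum_prob_snd]
  rw [Finset.sum_comm]
  simp only [← Finset.sum_div, ← Finset.sum_mul, sum_prob_fst, mul_self_div_self, sum_prob]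

/-- Submodularity of entropy, i.e. nonnegativity of `I(A; C | B)`. -/
lemma H_submodular {Ω S T U : Type*} [Fintype S] [Fintype T] [Fintype U] (p : PMF Ω)
    (A : Ω → S) (B : Ω → T) (C : Ω → U) :
    H p (fun ω => (A ω, B ω, C ω)) + H p B ≤
      H p (fun ω => (A ω, B ω)) + H p (fun ω => (B ω, C ω)) := by
  let W : Ω → S × T × U := fun ω => (A ω, B ω, C ω)
  have e0 : H p W = _ := H_comp_eq p W id
  have e1 : H p B = _ := H_comp_eq p W (fun w => w.2.1)
  have e2 : H p (fun ω => (A ω, B ω)) = _ := H_comp_eq p W (fun w => (w.1, w.2.1))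
  have e3 : H p (fun ω => (B ω, C ω)) = _ := H_comp_eq p W (fun w => w.2)
  change H p W + _ ≤ _
  rw [e0, e1, e2, e3, ← Finset.sum_add_distrib, ← Finset.sum_add_distrib, ← sub_nonpos,
    ← Finset.sum_sub_distrib]
  have hm := sum_markov p A B C
  have hW := sum_prob p W
  refine le_trans (Finset.sum_le_sum (g := fun w : S × T × U =>
    prob p (fun ω => (A ω, B ω)) (w.1, w.2.1) *
      prob p (fun ω => (B ω, C ω)) (w.2.1, w.2.2) / prob p B w.2.1 - prob p W w) fun w _ => ?_)
    (by rw [Finset.sum_sub_distrib, hm, hW, sub_self])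
  have l1 : prob p W w ≤ prob p B w.2.1 := prob_le_prob_comp p W (fun w => w.2.1) w
  have l2 : prob p W w ≤ prob p (fun ω => (A ω, B ω)) (w.1, w.2.1) :=
    prob_le_prob_comp p W (fun w => (w.1, w.2.1)) w
  have l3 : prob p W w ≤ prob p (fun ω => (B ω, C ω)) w.2 :=
    prob_le_prob_comp p W (fun w => w.2) w
  change prob p W w * -Real.log (prob p W w) + prob p W w * -Real.log (prob p B w.2.1) -
    (prob p W w * -Real.log (prob p (fun ω => (A ω, B ω)) (w.1, w.2.1)) +
      prob p W w * -Real.log (prob p (fun ω => (B ω, C ω)) w.2)) ≤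
    prob p (fun ω => (A ω, B ω)) (w.1, w.2.1) * prob p (fun ω => (B ω, C ω)) w.2 /
      prob p B w.2.1 - prob p W w
  have h0 := prob_nonneg p W w
  generalize prob p W w = q at *
  generalize prob p B w.2.1 = b at *
  generalize prob p (fun ω => (A ω, B ω)) (w.1, w.2.1) = x at *
  generalize prob p (fun ω => (B ω, C ω)) w.2 = y at *
  rcases h0.eq_or_lt with h | h
  · subst h
    simpa using div_nonneg (mul_nonneg l2 l3) l1
  · have hb := h.trans_le l1
    have hx := h.trans_le l2
    have hy := h.trans_le l3
    have key := Real.log_le_sub_one_of_pos (x := x * y / (q * b)) (by positivity)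
    rw [Real.log_div (by positivity) (by positivity), Real.log_mul hx.ne' hy.ne',
      Real.log_mul h.ne' hb.ne'] at key
    have key2 := mul_le_mul_of_nonneg_left key h.le
    have e : q * (x * y / (q * b) - 1) = x * y / b - q := by field_simp
    rw [e] at key2
    linarith

lemma H_unit {Ω : Type*} (p : PMF Ω) : H p (fun _ => ()) = 0 := by
  have h := sum_prob p (fun _ => ())
  rw [Fintype.sum_unique] at h
  unfold H
  rw [tsum_fintype, Fintype.sum_unique]
  change Real.negMulLog (prob p (fun _ => ()) default) = 0
  rw [h, Real.negMulLog_one]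

lemma H_subadditive {Ω S T : Type*} [Fintype S] [Fintype T] (p : PMF Ω)
    (A : Ω → S) (C : Ω → T) :
    H p (fun ω => (A ω, C ω)) ≤ H p A + H p C := by
  have h := H_submodular p A (fun _ => ()) C
  have h1 := H_comp_le p (fun ω => (A ω, (), C ω)) (fun w => (w.1, w.2.2))
  have h2 := H_comp_le p A (fun a => (a, ()))
  have h3 := H_comp_le p C (fun c => ((), c))
  rw [H_unit] at h
  linarith

/-- If `Z` is a deterministic function of `X1` and also of `(Y, X2)`,
then `H(Y) ≥ H(X1 | X2) − H(X1 | Z)`. -/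
theorem stmt1 {Ω S1 S2 T U : Type*}
    [Fintype S1] [Fintype S2] [Fintype T] [Fintype U]
    (p : PMF Ω) (X1 : Ω → S1) (X2 : Ω → S2) (Y : Ω → T) (Z : Ω → U)
    (hZ1 : IsDetFnOf p Z X1)
    (hZ2 : IsDetFnOf p Z (fun ω => (Y ω, X2 ω))) :
    condEnt p X1 X2 - condEnt p X1 Z ≤ H p Y := by
  obtain ⟨g, hg⟩ := hZ2
  have hsub := H_submodular p X1 Z X2
  have hproj := H_comp_le p (fun ω => (X1 ω, Z ω, X2 ω)) (fun w => (w.1, w.2.2))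
  have hae : H p (fun ω => (Z ω, X2 ω)) = H p (fun ω => (g (Y ω, X2 ω), X2 ω)) :=
    H_congr p _ _ fun ω hω => by rw [hg ω hω]
  have hrec := H_comp_le p (fun ω => (Y ω, X2 ω)) (fun w => (g w, w.2))
  have hadd := H_subadditive p Y X2
  unfold condEnt H2
  linarith
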